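/- Let X and W be subcategories of A such that W is X-injective (W ⊆ X^⊥) and W is a cogenerator for X. Then W = X ∩ X^⊥ = X ∩ Ŵ, and Ŵ = X̂ ∩ X^⊥. -/

import Mathlib

/-!
An object of `X ∩ X^⊥` embeds in an object of `W` with cokernel in `X`; the embedding splits, so
the object lies in `W` (`mem_of_rightPerp`). Dimension shifting gives `Ŵ ⊆ X^⊥`
(`rightPerp_of_hat`), whence `W = X ∩ X^⊥ = X ∩ Ŵ` and `Ŵ ⊆ X̂ ∩ X^⊥`.

For `X̂ ∩ X^⊥ ⊆ Ŵ` the tool is the Auslander–Buchweitz approximation `0 → Y → E → M → 0` of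
`M ∈ X̂` with `E ∈ X` and `Y ∈ Ŵ` (`exists_approximation`): if `M ∈ X^⊥`, then
`E ∈ X ∩ X^⊥ = W` and therefore `M ∈ Ŵ`. The construction of the approximation needs `X` to be
closed under extensions, which is not assumed. So `X` is replaced by its extension closure
`ExtHull X`: this has the same right orthogonal (`rightPerp_extHull`), and `W` is still a
cogenerator for it (`isCogenerator_extHull`).
-/

open CategoryTheory CategoryTheory.Limits CategoryTheory.Abelian ZeroObject

universe w v u

namespace FrobeniusPaper

variable {C : Type u} [Category.{v} C] [Abelian C]

/-- `f, g` form a short exact sequence `0 → A → B → D → 0` in the abelian category `C`. -/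
def IsSES {A B D : C} (f : A ⟶ B) (g : B ⟶ D) : Prop :=
  ∃ w : f ≫ g = 0, (ShortComplex.mk f g w).ShortExact

/-- A "subcategory" in the sense of the paper: a full additive subcategory, regarded as the
predicate of membership for its objects, closed under isomorphisms and direct summands. -/
structure IsSubcat (X : C → Prop) : Prop where
  zero : X 0
  iso_closed : ∀ {A B : C}, (A ≅ B) → X A → X B
  biprod_closed : ∀ {A B : C}, X A → X B → X (A ⊞ B)
  summand_closed : ∀ {A M : C} (i : A ⟶ M) (p : M ⟶ A), i ≫ p = 𝟙 A → X M → X A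

/-- `Hat X n M` means `M ∈ X̂ₙ`, i.e. there is an exact sequence
`0 → Xₙ → ⋯ → X₁ → X₀ → M → 0` with all `Xᵢ ∈ X`. -/
def Hat (X : C → Prop) : ℕ → C → Prop
  | 0, M => X M
  | (n + 1), M => ∃ (K E : C) (f : K ⟶ E) (g : E ⟶ M), IsSES f g ∧ X E ∧ Hat X n K

/-- `M ∈ X̂ = ⋃ₙ X̂ₙ`. -/
def HatAll (X : C → Prop) (M : C) : Prop := ∃ n, Hat X n M

/-- `W` is a cogenerator for `X`. -/
def IsCogenerator (W X : C → Prop) : Prop :=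
  (∀ M, W M → X M) ∧
    ∀ M, X M → ∃ (W₀ X' : C) (f : M ⟶ W₀) (g : W₀ ⟶ X'), IsSES f g ∧ W W₀ ∧ X X'

/-- `W` is a generator for `X`. -/
def IsGenerator (W X : C → Prop) : Prop :=
  (∀ M, W M → X M) ∧
    ∀ M, X M → ∃ (X' W₀ : C) (f : X' ⟶ W₀) (g : W₀ ⟶ M), IsSES f g ∧ W W₀ ∧ X X'

/-- `X` is closed under extensions. -/
def ExtClosed (X : C → Prop) : Prop :=
  ∀ ⦃A B D : C⦄ (f : A ⟶ B) (g : B ⟶ D), IsSES f g → X A → X D → X B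

/-- `X` is closed under kernels of epimorphisms. -/
def KerEpiClosed (X : C → Prop) : Prop :=
  ∀ ⦃A B D : C⦄ (f : A ⟶ B) (g : B ⟶ D), IsSES f g → X B → X D → X A

/-- A thick subcategory: closed under direct summands and two-out-of-three for
short exact sequences. -/
def IsThickSub (T : C → Prop) : Prop :=
  IsSubcat T ∧ ∀ ⦃A B D : C⦄ (f : A ⟶ B) (g : B ⟶ D), IsSES f g →
    (T A → T B → T D) ∧ (T A → T D → T B) ∧ (T B → T D → T A)

/-- Membership in `Thick(X)`, the smallest thick subcategory containing `X`. -/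
def thickClosure (X : C → Prop) (M : C) : Prop :=
  ∀ T : C → Prop, IsThickSub T → (∀ N, X N → T N) → T M

variable [HasExt.{w} C]

/-- `Y ∈ X^⊥`, i.e. `Extⁱ(M, Y) = 0` for all `i ≥ 1` and `M ∈ X`. -/
def rightPerp (X : C → Prop) (Y : C) : Prop :=
  ∀ M, X M → ∀ i : ℕ, 1 ≤ i → Subsingleton (Abelian.Ext M Y i)

/-- A left Frobenius pair `(X, W)`. -/
structure LeftFrobenius (X W : C → Prop) : Prop where
  subX : IsSubcat X
  subW : IsSubcat W
  extClosed : ExtClosed X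
  kerEpiClosed : KerEpiClosed X
  cogen : IsCogenerator W X
  perp : ∀ M, W M → rightPerp X M

/-- A strong left Frobenius pair `(X, W)`. -/
structure StrongLeftFrobenius (X W : C → Prop) extends LeftFrobenius X W : Prop where
  gen : IsGenerator W X
  proj : ∀ M N, W M → X N → ∀ i : ℕ, 1 ≤ i → Subsingleton (Abelian.Ext M N i)

/-- A cotorsion pair `(U, V)` on an extension-closed subcategory `B` of `C`. -/
structure CotorsionPairOn (B U V : C → Prop) : Prop where
  subU : ∀ M, U M → B M
  subV : ∀ M, V M → B M
  isoU : ∀ {A B' : C}, (A ≅ B') → U A → U B'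
  summandU : ∀ {A M : C} (i : A ⟶ M) (p : M ⟶ A), i ≫ p = 𝟙 A → U M → U A
  isoV : ∀ {A B' : C}, (A ≅ B') → V A → V B'
  summandV : ∀ {A M : C} (i : A ⟶ M) (p : M ⟶ A), i ≫ p = 𝟙 A → V M → V A
  ext1 : ∀ M N, U M → V N → Subsingleton (Abelian.Ext M N 1)
  res : ∀ M, B M → ∃ (V₀ U₀ : C) (f : V₀ ⟶ U₀) (g : U₀ ⟶ M), IsSES f g ∧ U U₀ ∧ V V₀
  cores : ∀ M, B M → ∃ (V₀ U₀ : C) (f : M ⟶ V₀) (g : V₀ ⟶ U₀), IsSES f g ∧ U U₀ ∧ V V₀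

end FrobeniusPaper

namespace FrobeniusPaper

variable {C : Type u} [Category.{v} C] [Abelian C]

/-! ### Short exact sequences and pushouts -/

namespace IsSES

theorem mono {A B D : C} {f : A ⟶ B} {g : B ⟶ D} (h : IsSES f g) : Mono f :=
  h.choose_spec.mono_f

theorem epi {A B D : C} {f : A ⟶ B} {g : B ⟶ D} (h : IsSES f g) : Epi g :=
  h.choose_spec.epi_g

theorem comp_zero {A B D : C} {f : A ⟶ B} {g : B ⟶ D} (h : IsSES f g) : f ≫ g = 0 :=
  h.choose

theorem exists_desc {A B D T : C} {f : A ⟶ B} {g : B ⟶ D} (h : IsSES f g) (t : B ⟶ T)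
    (ht : f ≫ t = 0) : ∃ s : D ⟶ T, g ≫ s = t := by
  have := h.epi
  exact ⟨h.choose_spec.exact.desc t ht, h.choose_spec.exact.g_desc t ht⟩

theorem of_desc {A B D : C} {f : A ⟶ B} {g : B ⟶ D} (hf : Mono f) (hg : Epi g)
    (w : f ≫ g = 0) (h : ∀ (T : C) (t : B ⟶ T), f ≫ t = 0 → ∃ s : D ⟶ T, g ≫ s = t) :
    IsSES f g := by
  refine ⟨w, ?_⟩
  have hex : (ShortComplex.mk f g w).Exact := by
    apply ShortComplex.exact_of_g_is_cokernel
    exact CokernelCofork.IsColimit.ofπ _ _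
      (fun t ht => (h _ t ht).choose) (fun t ht => (h _ t ht).choose_spec)
      (fun t ht m hm => by
        have : g ≫ m = g ≫ (h _ t ht).choose := hm.trans (h _ t ht).choose_spec.symm
        exact (cancel_epi g).1 this)
  exact { exact := hex, mono_f := hf, epi_g := hg }

/-- Pushing out a short exact sequence along a map out of its left term keeps the cokernel. -/
theorem pushout_right {A B D A' : C} {f : A ⟶ B} {g : B ⟶ D} (h : IsSES f g) (p : A ⟶ A') :
    IsSES (pushout.inr f p)
      (pushout.desc g 0 (by rw [h.comp_zero, Limits.comp_zero]) : pushout f p ⟶ D) := by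
  have := h.mono
  have := h.epi
  refine of_desc inferInstance ?_ (pushout.inr_desc _ _ _) ?_
  · exact epi_of_epi_fac (f := pushout.inl f p) (pushout.inl_desc _ _ _)
  · intro T t ht
    obtain ⟨s, hs⟩ := h.exists_desc (pushout.inl f p ≫ t) (by
      rw [pushout.condition_assoc, ht, Limits.comp_zero])
    refine ⟨s, pushout.hom_ext ?_ ?_⟩
    · rw [pushout.inl_desc_assoc, hs]
    · rw [pushout.inr_desc_assoc, zero_comp, ht]

/-- The mirror image of `pushout_right`. -/
theorem pushout_left {A B A' D : C} (f : A ⟶ B) {p : A ⟶ A'} {c : A' ⟶ D} (h : IsSES p c) :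
    IsSES (pushout.inl f p)
      (pushout.desc 0 c (by rw [h.comp_zero, Limits.comp_zero]) : pushout f p ⟶ D) := by
  have := h.mono
  have := h.epi
  refine of_desc inferInstance ?_ (pushout.inl_desc _ _ _) ?_
  · exact epi_of_epi_fac (f := pushout.inr f p) (pushout.inr_desc _ _ _)
  · intro T t ht
    obtain ⟨s, hs⟩ := h.exists_desc (pushout.inr f p ≫ t) (by
      rw [← pushout.condition_assoc, ht, Limits.comp_zero])
    refine ⟨s, pushout.hom_ext ?_ ?_⟩
    · rw [pushout.inl_desc_assoc, zero_comp, ht]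
    · rw [pushout.inr_desc_assoc, hs]

/-- Pushing out a monomorphism `f : A ⟶ B` along an epimorphism `A ⟶ A'` with kernel `K` amounts
to dividing `B` by `K`. -/
theorem pushout_quot {K A A' B : C} {k : K ⟶ A} {p : A ⟶ A'} (h : IsSES k p) (f : A ⟶ B)
    (hf : Mono f) : IsSES (k ≫ f) (pushout.inl f p) := by
  have := h.mono
  have := h.epi
  refine of_desc inferInstance inferInstance ?_ ?_
  · rw [Category.assoc, pushout.condition, ← Category.assoc, h.comp_zero, zero_comp]
  · intro T t ht
    obtain ⟨s, hs⟩ := h.exists_desc (f ≫ t) (by simpa using ht)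
    exact ⟨pushout.desc t s hs.symm, pushout.inl_desc _ _ _⟩

theorem id_zero (M : C) : IsSES (0 : (0 : C) ⟶ M) (𝟙 M) :=
  of_desc inferInstance inferInstance (by simp) fun _ t _ => ⟨t, by simp⟩

end IsSES

/-- If `0 → V → P → D → 0` is a short exact sequence with a retraction `r`, then an embedding of
`D` into `V'` yields an embedding of `P ≅ V ⊞ D` into `V ⊞ V'` with the same cokernel. -/
theorem ses_of_retraction {V P D V' D' : C} {f : V ⟶ P} {g : P ⟶ D} (h : IsSES f g) {r : P ⟶ V}
    (hr : f ≫ r = 𝟙 V) {j : D ⟶ V'} {c : V' ⟶ D'} (h' : IsSES j c) :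
    IsSES (biprod.lift r (g ≫ j)) (biprod.snd ≫ c : V ⊞ V' ⟶ D') := by
  have := h'.mono
  have := h'.epi
  have := h.epi
  -- `s` is the section of `g` complementary to `r`
  obtain ⟨s, hs⟩ := h.exists_desc (𝟙 P - r ≫ f) (by simp [← Category.assoc, hr])
  have hsr : s ≫ r = 0 := by
    rw [← cancel_epi g, ← Category.assoc, hs]
    simp [hr]
  have hsg : s ≫ g = 𝟙 D := by
    rw [← cancel_epi g, ← Category.assoc, hs]
    simp [h.comp_zero]
  refine IsSES.of_desc ?_ (epi_comp _ _) (by simp [h'.comp_zero]) ?_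
  · refine Preadditive.mono_of_cancel_zero _ fun t ht => ?_
    have h1 : t ≫ r = 0 := by simpa using congrArg (· ≫ biprod.fst) ht
    have h2 : t ≫ g ≫ j = 0 := by simpa using congrArg (· ≫ biprod.snd) ht
    have h3 : t ≫ g = 0 := by rwa [← Category.assoc, ← cancel_mono j, zero_comp] at *
    have h4 : t ≫ g ≫ s = t ≫ (𝟙 P - r ≫ f) := by rw [hs]
    rw [← Category.assoc, h3, Preadditive.comp_sub, ← Category.assoc t r, h1] at h4
    simpa using h4.symm
  · intro T t ht
    have hl : f ≫ biprod.lift r (g ≫ j) = biprod.inl := by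
      ext <;> simp [hr, reassoc_of% h.comp_zero]
    have hrr : s ≫ biprod.lift r (g ≫ j) = j ≫ biprod.inr := by
      ext <;> simp [hsr, reassoc_of% hsg]
    obtain ⟨u, hu⟩ := h'.exists_desc (biprod.inr ≫ t) (by
      rw [← Category.assoc, ← hrr, Category.assoc, ht, Limits.comp_zero])
    refine ⟨u, biprod.hom_ext' _ _ ?_ ?_⟩
    · have h0 : (biprod.inl : V ⟶ V ⊞ V') ≫ t = 0 := by
        rw [← hl, Category.assoc, ht, Limits.comp_zero]
      simp [h0]
    · simp [hu]

theorem hat_mono {X X' : C → Prop} (h : ∀ M, X M → X' M) :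
    ∀ (n : ℕ) (M : C), Hat X n M → Hat X' n M
  | 0, M, hM => h M hM
  | n + 1, _, ⟨K, E, f, g, hS, hE, hK⟩ => ⟨K, E, f, g, hS, h E hE, hat_mono h n K hK⟩

/-! ### Approximation of objects of finite resolution dimension -/

/-- For extension-closed `X` with cogenerator `W`, every object of `X̂` is a quotient of an object
of `X` by an object of `Ŵ`. -/
theorem exists_approximation {X W : C → Prop} (hX : ExtClosed X) (hW : IsSubcat W)
    (hcog : IsCogenerator W X) : ∀ (n : ℕ) (M : C), Hat X n M →
      ∃ (Y E : C) (f : Y ⟶ E) (g : E ⟶ M), IsSES f g ∧ X E ∧ HatAll W Y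
  | 0, M, h => ⟨0, M, 0, 𝟙 M, IsSES.id_zero M, h, 0, hW.zero⟩
  | n + 1, M, ⟨K, E, k, e, hS, hE, hK⟩ => by
    obtain ⟨Y, F, y, p, hF, hXF, m, hY⟩ := exists_approximation hX hW hcog n K hK
    obtain ⟨W₀, X', a, b, hA, hW₀, hX'⟩ := hcog.2 F hXF
    -- the pushout `W₀ / Y` lies in `Ŵ` and contains `K` with cokernel `X'`
    have hQ := hF.pushout_quot a hA.mono
    have hQ' := hA.pushout_right p
    exact ⟨pushout a p, pushout k (pushout.inr a p), _, _, hS.pushout_right _,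
      hX _ _ (IsSES.pushout_left k hQ') hE hX', m + 1, Y, W₀, _, _, hQ, hW₀, hY⟩

/-! ### Vanishing of Ext along short exact sequences -/

variable [HasExt.{w} C]

/-- Maps out of `A` extend along a monomorphism whose cokernel `D` satisfies `Ext¹(D, Z) = 0`. -/
theorem exists_extension {A B D Z : C} {f : A ⟶ B} {g : B ⟶ D} (h : IsSES f g)
    (hZ : Subsingleton (Abelian.Ext D Z 1)) (a : A ⟶ Z) : ∃ b : B ⟶ Z, f ≫ b = a := by
  obtain ⟨w, hS⟩ := h
  obtain ⟨x, hx⟩ := Ext.contravariant_sequence_exact₁ hS Z (Ext.mk₀ a) (n₁ := 1) rfl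
    (Subsingleton.elim (α := Abelian.Ext D Z 1) _ _)
  obtain ⟨b, rfl⟩ := (Ext.mk₀_bijective _ _).2 x
  refine ⟨b, (Ext.mk₀_bijective _ _).1 ?_⟩
  rw [← hx, Ext.mk₀_comp_mk₀]

theorem rightPerp_middle {X : C → Prop} {A B D : C} {f : A ⟶ B} {g : B ⟶ D} (h : IsSES f g)
    (hA : rightPerp X A) (hD : rightPerp X D) : rightPerp X B := by
  obtain ⟨w, hS⟩ := h
  intro M hM i hi
  refine subsingleton_of_forall_eq 0 fun x => ?_
  have := hA M hM i hi
  have := hD M hM i hi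
  obtain ⟨y, rfl⟩ := Ext.covariant_sequence_exact₂ M hS x
    (Subsingleton.elim (α := Abelian.Ext M D i) _ _)
  rw [Subsingleton.elim (α := Abelian.Ext M A i) y 0, Ext.zero_comp]

theorem rightPerp_right {X : C → Prop} {A B D : C} {f : A ⟶ B} {g : B ⟶ D} (h : IsSES f g)
    (hA : rightPerp X A) (hB : rightPerp X B) : rightPerp X D := by
  obtain ⟨w, hS⟩ := h
  intro M hM i hi
  refine subsingleton_of_forall_eq 0 fun x => ?_
  have := hA M hM (i + 1) (by lia)
  have := hB M hM i hi
  obtain ⟨y, rfl⟩ := Ext.covariant_sequence_exact₃ M hS x rfl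
    (Subsingleton.elim (α := Abelian.Ext M A (i + 1)) _ _)
  rw [Subsingleton.elim (α := Abelian.Ext M B i) y 0, Ext.zero_comp]

theorem rightPerp_of_hat {X W : C → Prop} (hinj : ∀ M, W M → rightPerp X M) :
    ∀ (n : ℕ) (M : C), Hat W n M → rightPerp X M
  | 0, M, h => hinj M h
  | n + 1, _, ⟨K, E, _, _, hS, hE, hK⟩ =>
    rightPerp_right hS (rightPerp_of_hat hinj n K hK) (hinj E hE)

/-- If `W` is a cogenerator for `X`, then an object of `X ∩ X^⊥` is a direct summand of an object
of `W`, hence lies in `W`. -/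
theorem mem_of_rightPerp {X W : C → Prop} (hW : IsSubcat W) (hcog : IsCogenerator W X) {M : C}
    (hM : X M) (hp : rightPerp X M) : W M := by
  obtain ⟨W₀, X', f, g, hS, hW₀, hX'⟩ := hcog.2 M hM
  obtain ⟨r, hr⟩ := exists_extension hS (hp X' hX' 1 le_rfl) (𝟙 M)
  exact hW.summand_closed f r hr hW₀

/-! ### The extension closure -/

/-- The extension closure of `X`: the smallest class of objects containing `X` and closed under
extensions. -/
inductive ExtHull (X : C → Prop) : C → Prop
  | of {M : C} : X M → ExtHull X M
  | ext {A B D : C} (f : A ⟶ B) (g : B ⟶ D) : IsSES f g → ExtHull X A → ExtHull X D → ExtHull X B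

theorem rightPerp_extHull {X : C → Prop} {Y : C} (hY : rightPerp X Y) :
    rightPerp (ExtHull X) Y := by
  intro M hM i hi
  induction hM with
  | of h => exact hY _ h i hi
  | @ext A B D f g h _ _ hA hD =>
    obtain ⟨w, hS⟩ := h
    refine subsingleton_of_forall_eq 0 fun x => ?_
    obtain ⟨y, rfl⟩ := Ext.contravariant_sequence_exact₂ hS Y x
      (Subsingleton.elim (α := Abelian.Ext A Y i) _ _)
    rw [Subsingleton.elim (α := Abelian.Ext D Y i) y 0, Ext.comp_zero]

/-- An `X`-injective cogenerator for `X` is also a cogenerator for the extension closure of `X`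
(a dual horseshoe argument). -/
theorem isCogenerator_extHull {X W : C → Prop} (hW : IsSubcat W)
    (hinj : ∀ M, W M → rightPerp X M) (hcog : IsCogenerator W X) :
    IsCogenerator W (ExtHull X) := by
  refine ⟨fun M hM => .of (hcog.1 M hM), fun M hM => ?_⟩
  induction hM with
  | of h =>
    obtain ⟨W₀, X', f, g, hS, hW₀, hX'⟩ := hcog.2 _ h
    exact ⟨W₀, X', f, g, hS, hW₀, .of hX'⟩
  | @ext A B D f g h _ hD' ihA ihD =>
    obtain ⟨WA, A', a, a', hA, hWA, hA'⟩ := ihA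
    obtain ⟨WD, D', d, d', hD, hWD, hD''⟩ := ihD
    -- the pushout `P` is an extension of `D` by `WA`, which splits because `Ext¹(D, WA) = 0`
    have hP := h.pushout_right a
    have hP' := IsSES.pushout_left f hA
    obtain ⟨r, hr⟩ := exists_extension hP
      (rightPerp_extHull (hinj WA hWA) D hD' 1 le_rfl) (𝟙 WA)
    have hQ := ses_of_retraction hP hr hD
    -- the cokernel of `B ⟶ P ⟶ WA ⊞ WD` is an extension of `D'` by `A'`
    exact ⟨WA ⊞ WD, _, _, _, hP'.pushout_quot _ hQ.mono, hW.biprod_closed hWA hWD,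
      .ext _ _ (hQ.pushout_right _) hA' hD''⟩

/-- If `W` is an `X`-injective cogenerator for `X`, then
`W = X ∩ X^⊥ = X ∩ Ŵ` and `Ŵ = X̂ ∩ X^⊥`. -/
theorem statement6 {C : Type u} [Category.{v} C] [Abelian C]
    [EnoughProjectives C] [EnoughInjectives C] [HasExt.{w} C]
    (X W : C → Prop) (hX : IsSubcat X) (hW : IsSubcat W)
    (hinj : ∀ M, W M → rightPerp X M) (hcog : IsCogenerator W X) :
    (∀ M, W M ↔ X M ∧ rightPerp X M) ∧
    (∀ M, W M ↔ X M ∧ HatAll W M) ∧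
    (∀ M, HatAll W M ↔ HatAll X M ∧ rightPerp X M) := by
  have hperp : ∀ M, HatAll W M → rightPerp X M := fun M ⟨n, h⟩ => rightPerp_of_hat hinj n M h
  refine ⟨fun M => ⟨fun h => ⟨hcog.1 M h, hinj M h⟩, fun h => mem_of_rightPerp hW hcog h.1 h.2⟩,
    fun M => ⟨fun h => ⟨hcog.1 M h, 0, h⟩,
      fun h => mem_of_rightPerp hW hcog h.1 (hperp M h.2)⟩,
    fun M => ⟨fun h => ⟨?_, hperp M h⟩, ?_⟩⟩
  · obtain ⟨n, h⟩ := h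
    exact ⟨n, hat_mono hcog.1 n M h⟩
  · rintro ⟨⟨n, hn⟩, hM⟩
    have hcog' := isCogenerator_extHull hW hinj hcog
    obtain ⟨Y, E, f, g, hS, hE, m, hY⟩ := exists_approximation (X := ExtHull X)
      (fun _ _ _ f g h hA hD => .ext f g h hA hD) hW hcog' n M
      (hat_mono (fun _ h => .of h) n M hn)
    exact ⟨m + 1, Y, E, f, g, hS, mem_of_rightPerp hW hcog' hE
      (rightPerp_extHull (rightPerp_middle hS (hperp Y ⟨m, hY⟩) hM)), hY⟩

end FrobeniusPaper
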